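/- Let R be a commutative ring whose underlying additive group is torsion-free, and let A = R[x, t, t⁻¹] be the Laurent polynomial ring in t over the polynomial ring R[x]. Let ω = f·dx + g·t⁻¹·dt ∈ Ω_{A/R} with f, g ∈ A. Let B = R[x, x', t, t⁻¹] and let μ, p₁, p₂ : A → B be the R-algebra homomorphisms fixing t and sending x to x + x', to x, and to x' respectively; let C = R[x, t, t⁻¹, s, s⁻¹] and let ν, q₁, q₂ : A → C be the R-algebra homomorphisms fixing x and sending t to t·s, to t, and to s respectively. Assume μ*(ω) = p₁*(ω) + p₂*(ω) in Ω_{B/R} and ν*(ω) = q₁*(ω) + q₂*(ω) in Ω_{C/R}. If moreover the R-algebra homomorphism e₁ : A → R[t, t⁻¹] sending x to 1 and fixing t satisfies e₁*(ω) = t⁻¹·dt in Ω_{R[t,t⁻¹]/R}, then ω = x·t⁻¹·dt. -/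

import Mathlib

set_option synthInstance.maxHeartbeats 1000000
set_option maxHeartbeats 1000000

/-!
The coefficients of `ω = f·dx + g·t⁻¹·dt` are recovered by contracting with the vector fields
`∂/∂x` and `t·∂/∂t`, so horizontality turns into functional equations for `f` and `g`.

Multiplicative horizontality contracted with `∂/∂x` reads `f(x, ts) = f(x, t) + f(x, s)`; comparing
coefficients of `s⁰` gives `f = 0`. Additive horizontality contracted with `t·∂/∂t` reads
`g(x + x', t) = g(x, t) + g(x', t)`, so over a torsion-free ring every coefficient of `g` as a
Laurent polynomial in `t` is a multiple of `x`. The pull-back condition says `g(1, t) = 1`, which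
fixes these multiples: `g = x`.
-/

section WeightedDerivation

open AddMonoidAlgebra

variable {R S M : Type*} [CommSemiring R] [CommSemiring S] [Algebra R S] [AddCommMonoid M]

/-- The linear map underlying `weightedDerivation`. It is defined for every linear map `d`, so that
its values on monomials are available before the Leibniz rule is proved. -/
noncomputable def weightedLinearMap (d : S →ₗ[R] S) (w : M →+ S) : S[M] →ₗ[R] S[M] :=
  Finsupp.lsum R (fun m ↦ lsingle m ∘ₗ (d + LinearMap.mulLeft R (w m))) ∘ₗ
    (coeffLinearEquiv R).toLinearMap

theorem weightedLinearMap_single (d : S →ₗ[R] S) (w : M →+ S) (m : M) (a : S) :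
    weightedLinearMap d w (single m a) = single m (d a + w m * a) := by
  simp [weightedLinearMap]

/-- The derivation of the monoid algebra `S[M]` that extends the derivation `d` of `S` and
multiplies the monomial of exponent `m` by its weight `w m`. For `w = 0` this is
`d` acting on coefficients. -/
noncomputable def weightedDerivation (d : Derivation R S S) (w : M →+ S) :
    Derivation R S[M] S[M] where
  toLinearMap := weightedLinearMap d w
  map_one_eq_zero' := by simp [one_def, weightedLinearMap_single]
  leibniz' p q := by
    induction p using induction_linear with
    | zero => simp
    | add p₁ p₂ h₁ h₂ => rw [add_mul, map_add, h₁, h₂, map_add, add_smul, smul_add]; abel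
    | single m a =>
      induction q using induction_linear with
      | zero => simp
      | add q₁ q₂ h₁ h₂ => rw [mul_add, map_add, h₁, h₂, map_add, add_smul, smul_add]; abel
      | single n b =>
        simp only [single_mul_single, weightedLinearMap_single, smul_eq_mul, add_comm n m,
          ← single_add, Derivation.coeFn_coe, Derivation.leibniz, map_add]
        congr 1
        ring

theorem weightedDerivation_single (d : Derivation R S S) (w : M →+ S) (m : M) (a : S) :
    weightedDerivation d w (single m a) = single m (d a + w m * a) :=
  weightedLinearMap_single ..

end WeightedDerivation

section AdditivePolynomial

open Polynomial

variable {R σ : Type*} [CommRing R] {i j : σ} {p : R[X]}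

theorem coeff_zero_eq_zero_of_aeval_X_add_X
    (hp : aeval (MvPolynomial.X i + MvPolynomial.X j : MvPolynomial σ R) p =
      aeval (MvPolynomial.X i) p + aeval (MvPolynomial.X j) p) :
    p.coeff 0 = 0 := by
  have h := congr(MvPolynomial.aeval (0 : σ → R) $hp)
  rw [map_add] at h
  simpa [-MvPolynomial.aeval_zero, ← aeval_algHom_apply, ← coeff_zero_eq_aeval_zero] using h

theorem derivative_eq_C_of_aeval_X_add_X (hij : i ≠ j)
    (hp : aeval (MvPolynomial.X i + MvPolynomial.X j : MvPolynomial σ R) p =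
      aeval (MvPolynomial.X i) p + aeval (MvPolynomial.X j) p) :
    derivative p = C (p.derivative.coeff 0) := by
  classical
  have hj : aeval (MvPolynomial.X i + MvPolynomial.X j : MvPolynomial σ R) (derivative p) =
      aeval (MvPolynomial.X j) (derivative p) := by
    simpa [Derivation.map_aeval, MvPolynomial.pderiv_X_of_ne hij] using
      congr(MvPolynomial.pderiv j $hp)
  have h := congr(MvPolynomial.aeval (Pi.single i X : σ → R[X]) $hj)
  simpa [← aeval_algHom_apply, hij.symm, ← coeff_zero_eq_aeval_zero'] using h

theorem eq_C_mul_X_of_aeval_X_add_X [IsAddTorsionFree R] (hij : i ≠ j)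
    (hp : aeval (MvPolynomial.X i + MvPolynomial.X j : MvPolynomial σ R) p =
      aeval (MvPolynomial.X i) p + aeval (MvPolynomial.X j) p) :
    p = C (p.eval 1) * X := by
  set a := p.derivative.coeff 0
  have hd : derivative (p - C a * X) = 0 := by
    rw [derivative_sub, derivative_C_mul_X, derivative_eq_C_of_aeval_X_add_X hij hp, sub_self]
  have hlin : p = C a * X := by
    simpa [coeff_zero_eq_zero_of_aeval_X_add_X hp, sub_eq_zero] using eq_C_of_derivative_eq_zero hd
  rw [hlin]
  simp

end AdditivePolynomial

section Laurent

open LaurentPolynomial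
open scoped Polynomial

section Derivation

variable {R S : Type*} [CommSemiring R] [CommSemiring S] [Algebra R S]

theorem weightedDerivation_C_mul_T (d : Derivation R S S) (w : ℤ →+ S) (a : S) (n : ℤ) :
    weightedDerivation d w (C a * T n) = C (d a + w n * a) * T n := by
  rw [← single_eq_C_mul_T, weightedDerivation_single, single_eq_C_mul_T]

theorem weightedDerivation_C (d : Derivation R S S) (w : ℤ →+ S) (a : S) :
    weightedDerivation d w (C a) = C (d a) := by
  simpa using weightedDerivation_C_mul_T d w a 0

theorem weightedDerivation_T (d : Derivation R S S) (w : ℤ →+ S) (n : ℤ) :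
    weightedDerivation d w (T n) = C (w n) * T n := by
  simpa using weightedDerivation_C_mul_T d w 1 n

/-- The derivation `t · d/dt` of `S[t, t⁻¹]`, whose contraction with `f·dx + g·t⁻¹·dt` is `g`. -/
noncomputable def eulerDerivation (R S : Type*) [CommSemiring R] [CommRing S] [Algebra R S] :
    Derivation R S[T;T⁻¹] S[T;T⁻¹] :=
  weightedDerivation 0 (Int.castAddHom S)

theorem eulerDerivation_C (R : Type*) {S : Type*} [CommSemiring R] [CommRing S] [Algebra R S]
    (a : S) : eulerDerivation R S (C a) = 0 := by
  simp [eulerDerivation, weightedDerivation_C]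

theorem eulerDerivation_T_one (R S : Type*) [CommSemiring R] [CommRing S] [Algebra R S] :
    eulerDerivation R S (T 1) = T 1 := by
  simp [eulerDerivation, weightedDerivation_T]

end Derivation

section RingHom

variable {S S' F : Type*} [CommSemiring S] [CommSemiring S'] [FunLike F S[T;T⁻¹] S'[T;T⁻¹]]

theorem map_T_of_map_T_one [MonoidHomClass F S[T;T⁻¹] S'[T;T⁻¹]] (φ : F) {u : S'ˣ}
    (hT : φ (T 1) = C (u : S') * T 1) (n : ℤ) : φ (T n) = C (↑(u ^ n) : S') * T n := by
  have h : (φ : S[T;T⁻¹] →* S'[T;T⁻¹]).comp (AddMonoidAlgebra.of S ℤ) =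
      ((C : S' →+* S'[T;T⁻¹]) : S' →* S'[T;T⁻¹]).comp
        ((Units.coeHom S').comp (zpowersHom S'ˣ u)) * AddMonoidAlgebra.of S' ℤ :=
    MonoidHom.ext_mint (by simpa using! hT)
  exact DFunLike.congr_fun h (Multiplicative.ofAdd n)

theorem coeff_map_of_map_C [RingHomClass F S[T;T⁻¹] S'[T;T⁻¹]] (φ : F) {ψ : S →+* S'} {u : S'ˣ}
    (hC : ∀ a, φ (C a) = C (ψ a)) (hT : φ (T 1) = C (u : S') * T 1) (p : S[T;T⁻¹]) (n : ℤ) :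
    (φ p).coeff n = ψ (p.coeff n) * ↑(u ^ n) := by
  induction p using LaurentPolynomial.induction_on' with
  | add p q hp hq => simp [hp, hq, add_mul]
  | C_mul_T m a =>
    rw [map_mul, map_T_of_map_T_one φ hT, hC, ← mul_assoc, ← map_mul]
    simp only [← single_eq_C_mul_T, AddMonoidAlgebra.coeff_single]
    obtain rfl | h := eq_or_ne m n <;> simp [*]

end RingHom

section AlgHom

variable {R S : Type*} [CommSemiring R] [CommSemiring S] [Algebra R S]

theorem map_C_of_map_C_X (φ : R[X][T;T⁻¹] →ₐ[R] S[T;T⁻¹]) {ψ : R[X] →ₐ[R] S}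
    (hX : φ (C Polynomial.X) = C (ψ Polynomial.X)) (a : R[X]) : φ (C a) = C (ψ a) := by
  have h : φ.comp AddMonoidAlgebra.singleZeroAlgHom =
      (AddMonoidAlgebra.singleZeroAlgHom (R := R)).comp ψ :=
    Polynomial.algHom_ext hX
  exact DFunLike.congr_fun h a

theorem coeff_map_eq_aeval (φ : R[X][T;T⁻¹] →ₐ[R] S[T;T⁻¹]) {y : S}
    (hX : φ (C Polynomial.X) = C y) (hT : φ (T 1) = T 1)
    (p : R[X][T;T⁻¹]) (n : ℤ) : (φ p).coeff n = Polynomial.aeval y (p.coeff n) := by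
  have hC := map_C_of_map_C_X φ (ψ := Polynomial.aeval y) (by rwa [Polynomial.aeval_X])
  simpa using coeff_map_of_map_C φ (ψ := (Polynomial.aeval y : R[X] →ₐ[R] S)) (u := 1) hC
    (by simpa using hT) p n

end AlgHom

section MultiplicativeHorizontality

variable {S F : Type*}

theorem map_eq_C_of_map_C [CommSemiring S] [FunLike F S[T;T⁻¹] S[T;T⁻¹][T;T⁻¹]]
    [RingHomClass F S[T;T⁻¹] S[T;T⁻¹][T;T⁻¹]] (φ : F) (hC : ∀ a, φ (C a) = C (C a))
    (hT : φ (T 1) = C (T 1)) (f : S[T;T⁻¹]) : φ f = C f := by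
  have h : (φ : S[T;T⁻¹] →+* S[T;T⁻¹][T;T⁻¹]) = C :=
    AddMonoidAlgebra.ringHom_ext' (RingHom.ext hC) (MonoidHom.ext_mint hT)
  exact DFunLike.congr_fun h f

theorem eq_zero_of_map_eq_add [CommRing S] [FunLike F S[T;T⁻¹] S[T;T⁻¹][T;T⁻¹]]
    [RingHomClass F S[T;T⁻¹] S[T;T⁻¹][T;T⁻¹]] {ν q₁ q₂ : F}
    (hνC : ∀ a, ν (C a) = C (C a)) (hνT : ν (T 1) = C (T 1) * T 1)
    (hq₁C : ∀ a, q₁ (C a) = C (C a)) (hq₁T : q₁ (T 1) = C (T 1))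
    (hq₂C : ∀ a, q₂ (C a) = C (C a)) (hq₂T : q₂ (T 1) = T 1)
    {f : S[T;T⁻¹]} (h : ν f = q₁ f + q₂ f) : f = 0 := by
  have hν : (ν f).coeff 0 = C (f.coeff 0) := by
    simpa using coeff_map_of_map_C ν (ψ := C) (u := (isUnit_T 1).unit) hνC hνT f 0
  have hq₁ : (q₁ f).coeff 0 = f := by
    simp [map_eq_C_of_map_C q₁ hq₁C hq₁T]
  have hq₂ : (q₂ f).coeff 0 = C (f.coeff 0) := by
    simpa using coeff_map_of_map_C q₂ (ψ := C) (u := 1) hq₂C (by simpa using hq₂T) f 0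
  have h₀ := congr(($h).coeff 0)
  rwa [AddMonoidAlgebra.coeff_add, Finsupp.add_apply, hν, hq₁, hq₂, right_eq_add] at h₀

end MultiplicativeHorizontality

theorem eq_C_X_of_map_eq_add {R σ : Type*} [CommRing R] [IsAddTorsionFree R] {i j : σ}
    (hij : i ≠ j) {μ p₁ p₂ : R[X][T;T⁻¹] →ₐ[R] (MvPolynomial σ R)[T;T⁻¹]}
    (hμX : μ (C Polynomial.X) = C (MvPolynomial.X i) + C (MvPolynomial.X j)) (hμT : μ (T 1) = T 1)
    (hp₁X : p₁ (C Polynomial.X) = C (MvPolynomial.X i)) (hp₁T : p₁ (T 1) = T 1)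
    (hp₂X : p₂ (C Polynomial.X) = C (MvPolynomial.X j)) (hp₂T : p₂ (T 1) = T 1)
    {e : R[X][T;T⁻¹] →ₐ[R] R[T;T⁻¹]} (heX : e (C Polynomial.X) = 1) (heT : e (T 1) = T 1)
    {g : R[X][T;T⁻¹]} (hg : μ g = p₁ g + p₂ g) (heg : e g = 1) : g = C Polynomial.X := by
  have hadd (n : ℤ) :
      Polynomial.aeval (MvPolynomial.X i + MvPolynomial.X j : MvPolynomial σ R) (g.coeff n) =
        Polynomial.aeval (MvPolynomial.X i) (g.coeff n) +
          Polynomial.aeval (MvPolynomial.X j) (g.coeff n) := by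
    rw [← coeff_map_eq_aeval μ (by rw [hμX, map_add]) hμT, ← coeff_map_eq_aeval p₁ hp₁X hp₁T,
      ← coeff_map_eq_aeval p₂ hp₂X hp₂T, hg, AddMonoidAlgebra.coeff_add, Finsupp.add_apply]
  have heval (n : ℤ) : (g.coeff n).eval 1 = (1 : R[T;T⁻¹]).coeff n := by
    rw [← heg, coeff_map_eq_aeval e (by rwa [map_one]) heT, Polynomial.coe_aeval_eq_eval]
  refine LaurentPolynomial.ext fun n ↦ ?_
  rw [eq_C_mul_X_of_aeval_X_add_X hij (hadd n), heval, ← map_one C, C_apply, C_apply]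
  split_ifs <;> simp

section Contraction

open KaehlerDifferential

variable {R S B : Type*} [CommRing R] [CommSemiring S] [Algebra R S] [CommRing B] [Algebra R B]
  (δ : Derivation R B B) {φ ψ χ : S[T;T⁻¹] →ₐ[R] B} {x : S[T;T⁻¹]} (f g : S[T;T⁻¹])

theorem lift_pullback_eq_map_dx_coeff (hφx : δ (φ x) = 1) (hφT : δ (φ (T 1)) = 0) :
    δ.liftKaehlerDifferential (φ f • D R B (φ x) + φ (g * T (-1)) • D R B (φ (T 1))) = φ f := by
  simp [hφx, hφT]

theorem lift_pullback_eq_map_dlog_coeff (hφx : δ (φ x) = 0) (hφT : δ (φ (T 1)) = φ (T 1)) :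
    δ.liftKaehlerDifferential (φ f • D R B (φ x) + φ (g * T (-1)) • D R B (φ (T 1))) = φ g := by
  have hg : φ (g * T (-1)) * φ (T 1) = φ g := by
    rw [← map_mul, mul_T_assoc, neg_add_cancel, T_zero, mul_one]
  simp [hφx, hφT, hg, -map_mul]

variable {f g}

theorem map_dx_coeff_eq_add_of_pullback_eq_add
    (hφx : δ (φ x) = 1) (hφT : δ (φ (T 1)) = 0) (hψx : δ (ψ x) = 1) (hψT : δ (ψ (T 1)) = 0)
    (hχx : δ (χ x) = 1) (hχT : δ (χ (T 1)) = 0)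
    (h : φ f • D R B (φ x) + φ (g * T (-1)) • D R B (φ (T 1)) =
      (ψ f • D R B (ψ x) + ψ (g * T (-1)) • D R B (ψ (T 1))) +
        (χ f • D R B (χ x) + χ (g * T (-1)) • D R B (χ (T 1)))) :
    φ f = ψ f + χ f := by
  rw [← lift_pullback_eq_map_dx_coeff δ f g hφx hφT, h, map_add,
    lift_pullback_eq_map_dx_coeff δ f g hψx hψT,
    lift_pullback_eq_map_dx_coeff δ f g hχx hχT]

theorem map_dlog_coeff_eq_add_of_pullback_eq_add
    (hφx : δ (φ x) = 0) (hφT : δ (φ (T 1)) = φ (T 1)) (hψx : δ (ψ x) = 0)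
    (hψT : δ (ψ (T 1)) = ψ (T 1)) (hχx : δ (χ x) = 0) (hχT : δ (χ (T 1)) = χ (T 1))
    (h : φ f • D R B (φ x) + φ (g * T (-1)) • D R B (φ (T 1)) =
      (ψ f • D R B (ψ x) + ψ (g * T (-1)) • D R B (ψ (T 1))) +
        (χ f • D R B (χ x) + χ (g * T (-1)) • D R B (χ (T 1)))) :
    φ g = ψ g + χ g := by
  rw [← lift_pullback_eq_map_dlog_coeff δ f g hφx hφT, h, map_add,
    lift_pullback_eq_map_dlog_coeff δ f g hψx hψT,
    lift_pullback_eq_map_dlog_coeff δ f g hχx hχT]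

end Contraction

end Laurent

open LaurentPolynomial in
/-- Example 4.1 of the paper: over a ring `R` with torsion-free additive group, a
differential form `ω = f·dx + g·t⁻¹·dt` on `A = R[x, t, t⁻¹]` satisfying the two
horizontality conditions for the partial group laws (via the `R`-algebra maps
`μ, p₁, p₂ : A → B = R[x, x', t, t⁻¹]` fixing `t` and sending `x` to `x + x'`, `x`,
`x'`, and `ν, q₁, q₂ : A → C = R[x, t, t⁻¹, s, s⁻¹]` fixing `x` and sending `t` to
`t·s`, `t`, `s`), and pulling back to `t⁻¹·dt` along the map `e₁ : A → R[t, t⁻¹]`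
sending `x` to `1`, equals `x·t⁻¹·dt`. -/
theorem stmt_7 {R : Type*} [CommRing R]
    (htf : ∀ (n : ℕ), 0 < n → ∀ r : R, n • r = 0 → r = 0)
    (f g : LaurentPolynomial (Polynomial R))
    (μ p₁ p₂ : LaurentPolynomial (Polynomial R) →ₐ[R]
      LaurentPolynomial (MvPolynomial (Fin 2) R))
    (hμx : μ (C Polynomial.X) = C (MvPolynomial.X 0) + C (MvPolynomial.X 1))
    (hμt : μ (T 1) = T 1)
    (hp₁x : p₁ (C Polynomial.X) = C (MvPolynomial.X 0)) (hp₁t : p₁ (T 1) = T 1)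
    (hp₂x : p₂ (C Polynomial.X) = C (MvPolynomial.X 1)) (hp₂t : p₂ (T 1) = T 1)
    (ν q₁ q₂ : LaurentPolynomial (Polynomial R) →ₐ[R]
      LaurentPolynomial (LaurentPolynomial (Polynomial R)))
    (hνx : ν (C Polynomial.X) = C (C Polynomial.X)) (hνt : ν (T 1) = C (T 1) * T 1)
    (hq₁x : q₁ (C Polynomial.X) = C (C Polynomial.X)) (hq₁t : q₁ (T 1) = C (T 1))
    (hq₂x : q₂ (C Polynomial.X) = C (C Polynomial.X)) (hq₂t : q₂ (T 1) = T 1)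
    -- horizontality of `ν₁`: `μ*(ω) = p₁*(ω) + p₂*(ω)` in `Ω_{B/R}`
    (hhoriz₁ :
      μ f • KaehlerDifferential.D R _ (μ (C Polynomial.X)) +
          μ (g * T (-1)) • KaehlerDifferential.D R _ (μ (T 1)) =
        (p₁ f • KaehlerDifferential.D R _ (p₁ (C Polynomial.X)) +
            p₁ (g * T (-1)) • KaehlerDifferential.D R _ (p₁ (T 1))) +
          (p₂ f • KaehlerDifferential.D R _ (p₂ (C Polynomial.X)) +
            p₂ (g * T (-1)) • KaehlerDifferential.D R _ (p₂ (T 1))))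
    -- horizontality of `ν₂`: `ν*(ω) = q₁*(ω) + q₂*(ω)` in `Ω_{C/R}`
    (hhoriz₂ :
      ν f • KaehlerDifferential.D R _ (ν (C Polynomial.X)) +
          ν (g * T (-1)) • KaehlerDifferential.D R _ (ν (T 1)) =
        (q₁ f • KaehlerDifferential.D R _ (q₁ (C Polynomial.X)) +
            q₁ (g * T (-1)) • KaehlerDifferential.D R _ (q₁ (T 1))) +
          (q₂ f • KaehlerDifferential.D R _ (q₂ (C Polynomial.X)) +
            q₂ (g * T (-1)) • KaehlerDifferential.D R _ (q₂ (T 1))))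
    (e₁ : LaurentPolynomial (Polynomial R) →ₐ[R] LaurentPolynomial R)
    (he₁x : e₁ (C Polynomial.X) = 1) (he₁t : e₁ (T 1) = T 1)
    -- `e₁*(ω) = t⁻¹·dt` in `Ω_{R[t,t⁻¹]/R}`
    (hpull :
      e₁ f • KaehlerDifferential.D R _ (e₁ (C Polynomial.X)) +
          e₁ (g * T (-1)) • KaehlerDifferential.D R _ (e₁ (T 1)) =
        (T (-1) : LaurentPolynomial R) •
          KaehlerDifferential.D R (LaurentPolynomial R) (T 1)) :
    f • KaehlerDifferential.D R (LaurentPolynomial (Polynomial R))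
          (C Polynomial.X : LaurentPolynomial (Polynomial R)) +
        (g * T (-1)) • KaehlerDifferential.D R (LaurentPolynomial (Polynomial R))
          (T 1 : LaurentPolynomial (Polynomial R)) =
      ((C Polynomial.X * T (-1) : LaurentPolynomial (Polynomial R))) •
        KaehlerDifferential.D R (LaurentPolynomial (Polynomial R))
          (T 1 : LaurentPolynomial (Polynomial R)) := by
  have : IsAddTorsionFree R := .of_not_isOfFinAddOrder fun r hr hfin ↦
    let ⟨n, hn, hnr⟩ := isOfFinAddOrder_iff_nsmul_eq_zero.1 hfin
    hr (htf n hn r hnr)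
  have hf : ν f = q₁ f + q₂ f := by
    refine map_dx_coeff_eq_add_of_pullback_eq_add
      (weightedDerivation (weightedDerivation Polynomial.derivative' 0) 0)
      ?_ ?_ ?_ ?_ ?_ ?_ hhoriz₂ <;>
      simp [*, weightedDerivation_C, weightedDerivation_T]
  have hf₀ : f = 0 := eq_zero_of_map_eq_add
    (map_C_of_map_C_X ν (ψ := AddMonoidAlgebra.singleZeroAlgHom) hνx) hνt
    (map_C_of_map_C_X q₁ (ψ := AddMonoidAlgebra.singleZeroAlgHom) hq₁x) hq₁t
    (map_C_of_map_C_X q₂ (ψ := AddMonoidAlgebra.singleZeroAlgHom) hq₂x) hq₂t hf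
  have hg : μ g = p₁ g + p₂ g := by
    refine map_dlog_coeff_eq_add_of_pullback_eq_add (eulerDerivation R _)
      ?_ ?_ ?_ ?_ ?_ ?_ hhoriz₁ <;>
      simp [*, eulerDerivation_C, eulerDerivation_T_one]
  have heg : e₁ g = 1 := by
    rw [← lift_pullback_eq_map_dlog_coeff (eulerDerivation R R) (x := C Polynomial.X) f g
      (by rw [he₁x, Derivation.map_one_eq_zero]) (by rw [he₁t, eulerDerivation_T_one]), hpull,
      map_smul, Derivation.liftKaehlerDifferential_comp_D, eulerDerivation_T_one, smul_eq_mul,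
      ← T_add, neg_add_cancel, T_zero]
  rw [hf₀, eq_C_X_of_map_eq_add zero_ne_one hμx hμt hp₁x hp₁t hp₂x hp₂t he₁x he₁t hg heg,
    add_eq_right]
  -- The scalar action elaborated in the statement is only definitionally the module action, so
  -- rewriting with `zero_smul` would not find it.
  exact zero_smul (LaurentPolynomial (Polynomial R))
    (KaehlerDifferential.D R (LaurentPolynomial (Polynomial R)) (C Polynomial.X))
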